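/- Let γ:[0,1]→ℝ² be absolutely continuous with constant speed ‖γ'(t)‖ = L(γ) > 0 for almost every t and ∫₀¹ Λ*(γ'(t)) dt < ∞. Then there exists a constant c>0 (depending on γ) such that for every ε>0 and every absolutely continuous φ:[0,1]→ℝ² with ∫₀¹ Λ*(φ'(t)) dt < ∞ and L(φ) ≥ L(γ)+ε, one has ∫₀¹ Λ*(φ'(t)) dt − ∫₀¹ Λ*(γ'(t)) dt ≥ cε. -/

import Mathlib

open MeasureTheory Set Filter Topology
open scoped ENNReal RealInnerProductSpace

noncomputable section

/-- The Euclidean plane. -/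
abbrev E2 := EuclideanSpace ℝ (Fin 2)

/-- The uniform probability measure on a set `A` (normalized Lebesgue measure). -/
def uniformOn {α : Type*} [MeasureSpace α] (A : Set α) : Measure α :=
  (volume A)⁻¹ • volume.restrict A

/-- The logarithmic moment generating function `Λ` of the uniform probability measure on the
open disk of radius `R` centered at the origin. -/
def logMGF (R : ℝ) (η : E2) : ℝ :=
  Real.log (∫ x, Real.exp (⟪x, η⟫) ∂(uniformOn (Metric.ball (0 : E2) R)))

/-- The Fenchel–Legendre transform `Λ*` of `logMGF R`, valued in `[0,∞]`.  Since the supremum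
includes `η = 0` (where the value is `0`), truncating negative values does not change it. -/
def lambdaStar (R : ℝ) (y : E2) : ℝ≥0∞ :=
  ⨆ η : E2, ENNReal.ofReal (⟪y, η⟫ - logMGF R η)

/-! By rotation invariance `Λ*(y)` depends only on `‖y‖`, so Jensen's inequality bounds
`∫ Λ*(φ')` below by the value of `Λ*` at a vector of length `∫ ‖φ'‖ ≥ L(φ)`, while
`∫ Λ*(γ')` is its value at a vector of length `L(γ)`. Since `Λ ≥ 0`, `Λ*` grows at least
linearly along rays, whence `∫ Λ*(φ') ≥ (L(φ) / L(γ)) ∫ Λ*(γ')`: any positive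
`c < ∫ Λ*(γ') / L(γ)` works. It exists because `Λ` and its gradient vanish at `0`, which makes
`Λ*` positive away from `0`. -/

section Legendre

variable {E : Type*} [NormedAddCommGroup E] [InnerProductSpace ℝ E] {f : E → ℝ}

/-- The Fenchel–Legendre transform of `f`, valued in `[0, ∞]`. Negative values are truncated, which
changes nothing when `f 0 ≤ 0`. -/
def legendreTransform (f : E → ℝ) (y : E) : ℝ≥0∞ :=
  ⨆ η : E, ENNReal.ofReal (⟪y, η⟫ - f η)

lemma ofReal_inner_sub_le_legendreTransform (f : E → ℝ) (y η : E) :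
    ENNReal.ofReal (⟪y, η⟫ - f η) ≤ legendreTransform f y :=
  le_iSup (fun η => ENNReal.ofReal (⟪y, η⟫ - f η)) η

lemma ofReal_mul_legendreTransform_le (hf : ∀ η, 0 ≤ f η) {r : ℝ} (hr : 1 ≤ r) (y : E) :
    ENNReal.ofReal r * legendreTransform f y ≤ legendreTransform f (r • y) := by
  rw [legendreTransform, ENNReal.mul_iSup]
  refine iSup_le fun η => ?_
  calc ENNReal.ofReal r * ENNReal.ofReal (⟪y, η⟫ - f η)
      = ENNReal.ofReal (r * (⟪y, η⟫ - f η)) := (ENNReal.ofReal_mul (by positivity)).symm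
    _ ≤ ENNReal.ofReal (⟪r • y, η⟫ - f η) := by
        rw [real_inner_smul_left, mul_sub]
        gcongr
        exact le_mul_of_one_le_left (hf η) hr
    _ ≤ legendreTransform f (r • y) := ofReal_inner_sub_le_legendreTransform f _ η

lemma legendreTransform_pos {y : E} (hy : y ≠ 0) (hf₀ : f 0 ≤ 0)
    (hf' : HasLineDerivAt ℝ f 0 0 y) : 0 < legendreTransform f y := by
  have hderiv : HasDerivAt (fun s : ℝ => ⟪y, s • y⟫ - f (s • y)) (‖y‖ ^ 2) 0 := by
    have hf'' : HasDerivAt (fun s : ℝ => f (s • y)) 0 0 := by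
      simpa only [HasLineDerivAt, zero_add] using hf'
    simpa only [real_inner_smul_right, real_inner_self_eq_norm_sq, one_mul, sub_zero] using
      ((hasDerivAt_id' (0 : ℝ)).mul_const (‖y‖ ^ 2)).fun_sub hf''
  obtain ⟨s, hs⟩ : ∃ s : ℝ, 0 < ⟪y, s • y⟫ - f (s • y) := by
    by_contra! hle
    have hmax : IsLocalMax (fun s : ℝ => ⟪y, s • y⟫ - f (s • y)) 0 :=
      Eventually.of_forall fun s => (hle s).trans (by simpa using hf₀)
    exact hy (by simpa using hmax.hasDerivAt_eq_zero hderiv)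
  exact (ENNReal.ofReal_pos.2 hs).trans_le (ofReal_inner_sub_le_legendreTransform f y _)

variable {α : Type*} [MeasurableSpace α] {ν : Measure α}

lemma ofReal_integral_le_lintegral_ofReal {u : α → ℝ} (hu : Integrable u ν) :
    ENNReal.ofReal (∫ x, u x ∂ν) ≤ ∫⁻ x, ENNReal.ofReal (u x) ∂ν := by
  rw [integral_eq_lintegral_pos_part_sub_lintegral_neg_part hu]
  exact (ENNReal.ofReal_le_ofReal (sub_le_self _ ENNReal.toReal_nonneg)).trans
    ENNReal.ofReal_toReal_le

variable [IsProbabilityMeasure ν]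

/-- Jensen's inequality; it holds for any `f` because `legendreTransform f` is a supremum of affine
functions. -/
lemma legendreTransform_integral_le [CompleteSpace E] {g : α → E} (hg : Integrable g ν) :
    legendreTransform f (∫ x, g x ∂ν) ≤ ∫⁻ x, legendreTransform f (g x) ∂ν := by
  refine iSup_le fun η => ?_
  have hint : Integrable (fun x => ⟪g x, η⟫) ν := hg.inner_const η
  calc ENNReal.ofReal (⟪∫ x, g x ∂ν, η⟫ - f η)
      = ENNReal.ofReal (∫ x, (⟪g x, η⟫ - f η) ∂ν) := by
        rw [integral_sub hint (integrable_const _), integral_const, probReal_univ, one_smul,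
          real_inner_comm, ← integral_inner hg]
        simp only [real_inner_comm]
    _ ≤ ∫⁻ x, ENNReal.ofReal (⟪g x, η⟫ - f η) ∂ν :=
        ofReal_integral_le_lintegral_ofReal (hint.sub (integrable_const _))
    _ ≤ ∫⁻ x, legendreTransform f (g x) ∂ν :=
        lintegral_mono fun x => ofReal_inner_sub_le_legendreTransform f (g x) η

variable {β : Type*}

/-- Radial functions, encoded by invariance under linear isometries; as reflections are transitive
on spheres, they are the functions of the norm. -/
def IsRadial (f : E → β) : Prop :=
  ∀ (T : E ≃ₗᵢ[ℝ] E) (x : E), f (T x) = f x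

lemma IsRadial.eq_of_norm_eq {f : E → β} (hf : IsRadial f) {x y : E} (h : ‖x‖ = ‖y‖) :
    f x = f y := by
  rw [← Submodule.reflection_sub h, hf]

lemma isRadial_legendreTransform (hf : IsRadial f) : IsRadial (legendreTransform f) :=
  fun T y => by
    rw [legendreTransform, ← T.toEquiv.iSup_comp]
    simp [legendreTransform, hf T]

lemma legendreTransform_integral_norm_smul_le [CompleteSpace E] (hf : IsRadial f)
    {g : α → E} (hg : Integrable g ν) {e : E} (he : ‖e‖ = 1) :
    legendreTransform f ((∫ x, ‖g x‖ ∂ν) • e) ≤ ∫⁻ x, legendreTransform f (g x) ∂ν :=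
  calc legendreTransform f ((∫ x, ‖g x‖ ∂ν) • e)
      = legendreTransform f (∫ x, ‖g x‖ • e ∂ν) := by rw [integral_smul_const]
    _ ≤ ∫⁻ x, legendreTransform f (‖g x‖ • e) ∂ν :=
        legendreTransform_integral_le (hg.norm.smul_const e)
    _ = ∫⁻ x, legendreTransform f (g x) ∂ν :=
        lintegral_congr fun x =>
          (isRadial_legendreTransform hf).eq_of_norm_eq (by simp [norm_smul, he])

lemma lintegral_legendreTransform_of_norm_eq (hf : IsRadial f) {g : α → E} {y : E}
    (hg : ∀ᵐ x ∂ν, ‖g x‖ = ‖y‖) :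
    ∫⁻ x, legendreTransform f (g x) ∂ν = legendreTransform f y :=
  calc ∫⁻ x, legendreTransform f (g x) ∂ν = ∫⁻ _, legendreTransform f y ∂ν :=
        lintegral_congr_ae (hg.mono fun _ hx => (isRadial_legendreTransform hf).eq_of_norm_eq hx)
    _ = legendreTransform f y := by rw [lintegral_const, measure_univ, mul_one]

lemma ofReal_mul_legendreTransform_le_lintegral [CompleteSpace E] (hf : IsRadial f)
    (hf₀ : ∀ η, 0 ≤ f η) {g : α → E} (hg : Integrable g ν) {y : E} (hy : y ≠ 0) {r : ℝ}
    (hr : 1 ≤ r) (hyg : r * ‖y‖ ≤ ∫ x, ‖g x‖ ∂ν) :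
    ENNReal.ofReal r * legendreTransform f y ≤ ∫⁻ x, legendreTransform f (g x) ∂ν := by
  have hrm : r ≤ (∫ x, ‖g x‖ ∂ν) / ‖y‖ := (le_div_iff₀ (norm_pos_iff.2 hy)).2 hyg
  calc ENNReal.ofReal r * legendreTransform f y
      ≤ ENNReal.ofReal ((∫ x, ‖g x‖ ∂ν) / ‖y‖) * legendreTransform f y := by gcongr
    _ ≤ legendreTransform f (((∫ x, ‖g x‖ ∂ν) / ‖y‖) • y) :=
        ofReal_mul_legendreTransform_le hf₀ (hr.trans hrm) y
    _ = legendreTransform f ((∫ x, ‖g x‖ ∂ν) • ‖y‖⁻¹ • y) := by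
        rw [smul_smul, div_eq_mul_inv]
    _ ≤ ∫⁻ x, legendreTransform f (g x) ∂ν :=
        legendreTransform_integral_norm_smul_le hf hg (norm_smul_inv_norm hy)

end Legendre

section RotationInvariant

variable {E : Type*} [NormedAddCommGroup E] [InnerProductSpace ℝ E] [MeasurableSpace E]

/-- The logarithmic moment generating function `η ↦ log ∫ exp ⟪x, η⟫ dμ` of a law `μ` on `E`.
Where the integral diverges, its value is `0` rather than `∞`. -/
def cumulantFun (μ : Measure E) (η : E) : ℝ :=
  Real.log (∫ x, Real.exp ⟪x, η⟫ ∂μ)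

variable {μ : Measure E}

lemma cumulantFun_zero [IsProbabilityMeasure μ] : cumulantFun μ 0 = 0 := by
  simp [cumulantFun]

lemma cumulantFun_smul (s : ℝ) (η : E) :
    cumulantFun μ (s • η) = ProbabilityTheory.cgf (fun x => ⟪x, η⟫) μ s := by
  simp only [cumulantFun, ProbabilityTheory.cgf, ProbabilityTheory.mgf, real_inner_smul_right]

lemma zero_mem_interior_integrableExpSet_inner
    (hexp : ∀ η, Integrable (fun x => Real.exp ⟪x, η⟫) μ) (η : E) :
    0 ∈ interior (ProbabilityTheory.integrableExpSet (fun x => ⟪x, η⟫) μ) := by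
  have huniv : ProbabilityTheory.integrableExpSet (fun x => ⟪x, η⟫) μ = univ :=
    eq_univ_of_forall fun s => by
      simpa only [real_inner_smul_right] using! hexp (s • η)
  simp only [huniv, interior_univ, mem_univ]

lemma cumulantFun_nonneg [IsProbabilityMeasure μ]
    (hexp : ∀ η, Integrable (fun x => Real.exp ⟪x, η⟫) μ)
    (hmean : ∀ η : E, ∫ x, ⟪x, η⟫ ∂μ = 0) (η : E) : 0 ≤ cumulantFun μ η := by
  have hint : Integrable (fun x => ⟪x, η⟫) μ := by
    simpa only [pow_one] using
      ProbabilityTheory.integrable_pow_of_mem_interior_integrableExpSet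
        (zero_mem_interior_integrableExpSet_inner hexp η) 1
  refine Real.log_nonneg ?_
  calc (1 : ℝ) = ∫ x, (⟪x, η⟫ + 1) ∂μ := by
        rw [integral_add hint (integrable_const _), hmean, integral_const, probReal_univ,
          one_smul, zero_add]
    _ ≤ ∫ x, Real.exp ⟪x, η⟫ ∂μ :=
        integral_mono (hint.add (integrable_const _)) (hexp η) fun x => Real.add_one_le_exp _

lemma hasLineDerivAt_cumulantFun_zero [IsProbabilityMeasure μ]
    (hexp : ∀ η, Integrable (fun x => Real.exp ⟪x, η⟫) μ) (η : E) :
    HasLineDerivAt ℝ (cumulantFun μ) (∫ x, ⟪x, η⟫ ∂μ) 0 η := by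
  have h₀ := zero_mem_interior_integrableExpSet_inner hexp η
  have hderiv := (ProbabilityTheory.analyticAt_cgf h₀).differentiableAt.hasDerivAt
  rw [ProbabilityTheory.deriv_cgf_zero h₀, probReal_univ, div_one] at hderiv
  simpa only [HasLineDerivAt, zero_add, cumulantFun_smul] using hderiv

/-- Invariance of a measure under all linear isometries of `E`, reflections included. -/
def IsRotationInvariant (μ : Measure E) : Prop :=
  ∀ T : E ≃ₗᵢ[ℝ] E, MeasurePreserving T μ μ

variable [BorelSpace E]

lemma IsRotationInvariant.integral_comp (hμ : IsRotationInvariant μ)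
    (T : E ≃ₗᵢ[ℝ] E) (u : E → ℝ) : ∫ x, u (T x) ∂μ = ∫ x, u x ∂μ :=
  (hμ T).integral_comp T.toHomeomorph.measurableEmbedding u

lemma IsRotationInvariant.integral_inner_eq_zero (hμ : IsRotationInvariant μ) (η : E) :
    ∫ x, ⟪x, η⟫ ∂μ = 0 := by
  have hneg := hμ.integral_comp (LinearIsometryEquiv.neg ℝ) fun x => ⟪x, η⟫
  simp only [LinearIsometryEquiv.coe_neg, inner_neg_left, integral_neg] at hneg
  linarith

lemma IsRotationInvariant.isRadial_cumulantFun (hμ : IsRotationInvariant μ) :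
    IsRadial (cumulantFun μ) := fun T η => by
  rw [cumulantFun, ← hμ.integral_comp T]
  simp only [LinearIsometryEquiv.inner_map_map, cumulantFun]

end RotationInvariant

section Length

variable {E : Type*} [NormedAddCommGroup E] [NormedSpace ℝ E]

lemma eVariationOn_le_lintegral_enorm {a b : ℝ} {φ g : ℝ → E} (hg : IntegrableOn g (Icc a b))
    (hφ : ∀ t ∈ Icc a b, φ t = φ a + ∫ s in a..t, g s) :
    eVariationOn φ (Icc a b) ≤ ∫⁻ t in Icc a b, ‖g t‖ₑ := by
  have hint : ∀ t ∈ Icc a b, IntervalIntegrable g volume a t := fun t ht =>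
    (hg.mono_set (uIcc_subset_Icc (left_mem_Icc.2 (ht.1.trans ht.2)) ht)).intervalIntegrable
  have hincr : ∀ s ∈ Icc a b, ∀ t ∈ Icc a b, s ≤ t →
      edist (φ t) (φ s) ≤ ∫⁻ x in Ioc s t, ‖g x‖ₑ := fun s hs t ht hst => by
    rw [hφ s hs, hφ t ht, edist_add_left, edist_eq_enorm_sub,
      intervalIntegral.integral_interval_sub_left (hint t ht) (hint s hs),
      intervalIntegral.integral_of_le hst]
    exact enorm_integral_le_lintegral_enorm g
  refine iSup_le fun ⟨n, u, hu, huI⟩ => ?_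
  calc ∑ i ∈ Finset.range n, edist (φ (u (i + 1))) (φ (u i))
      ≤ ∑ i ∈ Finset.range n, ∫⁻ x in Ioc (u i) (u (i + 1)), ‖g x‖ₑ :=
        Finset.sum_le_sum fun i _ => hincr _ (huI i) _ (huI (i + 1)) (hu i.le_succ)
    _ = ∫⁻ x in ⋃ i ∈ Finset.range n, Ioc (u i) (u (i + 1)), ‖g x‖ₑ :=
        (lintegral_biUnion_finset (hu.pairwise_disjoint_on_Ioc_succ.set_pairwise _)
          (fun _ _ => measurableSet_Ioc) _).symm
    _ ≤ ∫⁻ x in Icc a b, ‖g x‖ₑ :=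
        lintegral_mono_set <| iUnion₂_subset fun i _ =>
          Ioc_subset_Icc_self.trans (Icc_subset_Icc (huI i).1 (huI (i + 1)).2)

lemma le_integral_norm_of_ofReal_le_eVariationOn {a b : ℝ} {φ g : ℝ → E}
    (hg : IntegrableOn g (Icc a b)) (hφ : ∀ t ∈ Icc a b, φ t = φ a + ∫ s in a..t, g s) {l : ℝ}
    (hl : ENNReal.ofReal l ≤ eVariationOn φ (Icc a b)) : l ≤ ∫ t in Icc a b, ‖g t‖ := by
  rw [← ENNReal.ofReal_le_ofReal_iff (integral_nonneg fun _ => norm_nonneg _),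
    ofReal_integral_norm_eq_lintegral_enorm hg]
  exact hl.trans (eVariationOn_le_lintegral_enorm hg hφ)

end Length

section Ball

variable {E : Type*} [NormedAddCommGroup E] [InnerProductSpace ℝ E] [FiniteDimensional ℝ E]
  [MeasurableSpace E] [BorelSpace E]

lemma isProbabilityMeasure_uniformOn_ball {R : ℝ} (hR : 0 < R) (x : E) :
    IsProbabilityMeasure (uniformOn (Metric.ball x R)) :=
  ProbabilityTheory.cond_isProbabilityMeasure_of_finite
    (Metric.measure_ball_pos volume x hR).ne' measure_ball_lt_top.ne

lemma isRotationInvariant_uniformOn_ball (R : ℝ) :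
    IsRotationInvariant (uniformOn (Metric.ball (0 : E) R)) := fun T => by
  have hrestrict := T.measurePreserving.restrict_preimage (s := Metric.ball 0 R) measurableSet_ball
  rw [T.preimage_ball, map_zero] at hrestrict
  exact hrestrict.smul_measure _

lemma integrable_uniformOn_ball {R : ℝ} (hR : 0 < R) (x : E) {u : E → ℝ} (hu : Continuous u) :
    Integrable u (uniformOn (Metric.ball x R)) :=
  ((hu.continuousOn.integrableOn_compact (isCompact_closedBall x R)).mono_set
    Metric.ball_subset_closedBall).smul_measure
    (ENNReal.inv_ne_top.2 (Metric.measure_ball_pos volume x hR).ne')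

end Ball

lemma exists_pos_add_ofReal_mul_le {A : ℝ≥0∞} (hA : 0 < A) {ℓ : ℝ} (hℓ : 0 < ℓ) :
    ∃ c > 0, ∀ ε : ℝ, 0 ≤ ε → A + ENNReal.ofReal (c * ε) ≤ ENNReal.ofReal (1 + ε / ℓ) * A := by
  obtain ⟨c, hc, hcA⟩ := ENNReal.lt_iff_exists_nnreal_btwn.1
    (ENNReal.div_pos hA.ne' (ENNReal.ofReal_ne_top (r := ℓ)))
  refine ⟨(c : ℝ), by exact_mod_cast hc, fun ε hε => ?_⟩
  calc A + ENNReal.ofReal (c * ε)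
      = A + c * ENNReal.ofReal ε := by
        rw [ENNReal.ofReal_mul c.coe_nonneg, ENNReal.ofReal_coe_nnreal]
    _ ≤ A + A / ENNReal.ofReal ℓ * ENNReal.ofReal ε := by gcongr
    _ = ENNReal.ofReal (1 + ε / ℓ) * A := by
        rw [ENNReal.ofReal_add zero_le_one (by positivity), ENNReal.ofReal_one,
          ENNReal.ofReal_div_of_pos hℓ, div_eq_mul_inv, div_eq_mul_inv]
        ring

/-- When `γ` has infinite rate, the conclusion is that every longer path has infinite rate. -/
theorem statement13_general {E : Type*} [NormedAddCommGroup E] [InnerProductSpace ℝ E]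
    [CompleteSpace E] [MeasurableSpace E] [BorelSpace E] (μ : Measure E) [IsProbabilityMeasure μ]
    (hμ : IsRotationInvariant μ) (hexp : ∀ η, Integrable (fun x => Real.exp ⟪x, η⟫) μ)
    (γ gγ : ℝ → E) (hintγ : IntegrableOn gγ (Icc 0 1))
    (hACγ : ∀ t ∈ Icc (0 : ℝ) 1, γ t = γ 0 + ∫ s in (0 : ℝ)..t, gγ s)
    (hpos : 0 < (eVariationOn γ (Icc 0 1)).toReal)
    (hconst : ∀ᵐ t ∂(volume.restrict (Icc (0 : ℝ) 1)),
      ‖gγ t‖ = (eVariationOn γ (Icc 0 1)).toReal) :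
    ∃ c > 0, ∀ ε > 0, ∀ φ gφ : ℝ → E,
      IntegrableOn gφ (Icc 0 1) →
      (∀ t ∈ Icc (0 : ℝ) 1, φ t = φ 0 + ∫ s in (0 : ℝ)..t, gφ s) →
      ENNReal.ofReal ((eVariationOn γ (Icc 0 1)).toReal + ε) ≤ eVariationOn φ (Icc 0 1) →
      (∫⁻ t in Icc (0 : ℝ) 1, legendreTransform (cumulantFun μ) (gγ t)) +
          ENNReal.ofReal (c * ε) ≤
        ∫⁻ t in Icc (0 : ℝ) 1, legendreTransform (cumulantFun μ) (gφ t) := by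
  set ℓ := (eVariationOn γ (Icc 0 1)).toReal
  set Λstar := legendreTransform (cumulantFun μ)
  have : IsProbabilityMeasure (volume.restrict (Icc (0 : ℝ) 1)) := ⟨by simp⟩
  have hradial := hμ.isRadial_cumulantFun
  have hmean := hμ.integral_inner_eq_zero
  obtain ⟨y, hy⟩ : ∃ y : E, ‖y‖ = ℓ := hconst.exists.imp' gγ fun _ => id
  have hy₀ : y ≠ 0 := norm_pos_iff.1 (hy ▸ hpos)
  have hγ : ∫⁻ t in Icc (0 : ℝ) 1, Λstar (gγ t) = Λstar y :=
    lintegral_legendreTransform_of_norm_eq hradial (hy ▸ hconst)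
  have hΛy : 0 < Λstar y :=
    legendreTransform_pos hy₀ cumulantFun_zero.le
      (hmean y ▸ hasLineDerivAt_cumulantFun_zero hexp y)
  obtain ⟨c, hc, hcΛ⟩ := exists_pos_add_ofReal_mul_le hΛy hpos
  refine ⟨c, hc, fun ε hε φ gφ hint hAC hlen => ?_⟩
  have hL : (1 + ε / ℓ) * ‖y‖ ≤ ∫ t in Icc (0 : ℝ) 1, ‖gφ t‖ := by
    rw [hy, add_mul, one_mul, div_mul_cancel₀ ε hpos.ne']
    exact le_integral_norm_of_ofReal_le_eVariationOn hint hAC hlen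
  calc (∫⁻ t in Icc (0 : ℝ) 1, Λstar (gγ t)) + ENNReal.ofReal (c * ε)
      ≤ ENNReal.ofReal (1 + ε / ℓ) * Λstar y := hγ ▸ hcΛ ε hε.le
    _ ≤ ∫⁻ t in Icc (0 : ℝ) 1, Λstar (gφ t) :=
        ofReal_mul_legendreTransform_le_lintegral hradial (cumulantFun_nonneg hexp hmean) hint hy₀
          (le_add_of_nonneg_right (by positivity)) hL

lemma lambdaStar_eq_legendreTransform (R : ℝ) :
    lambdaStar R = legendreTransform (cumulantFun (uniformOn (Metric.ball 0 R))) := rfl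

/-- If `γ` is a constant speed absolutely continuous path of positive length
with finite rate, then there is `c > 0` such that every absolutely continuous path `φ` of
finite rate with `L(φ) ≥ L(γ) + ε` satisfies `I(φ) − I(γ) ≥ c ε`. -/
theorem statement13 (R : ℝ) (hR : 0 < R) (γ gγ : ℝ → E2)
    (hintγ : IntegrableOn gγ (Set.Icc 0 1) volume)
    (hACγ : ∀ t ∈ Set.Icc (0:ℝ) 1, γ t = γ 0 + ∫ s in (0:ℝ)..t, gγ s)
    (hfinγ : (∫⁻ t in Set.Icc (0:ℝ) 1, lambdaStar R (gγ t)) < ⊤)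
    (hpos : 0 < (eVariationOn γ (Set.Icc 0 1)).toReal)
    (hconst : ∀ᵐ t ∂(volume.restrict (Set.Icc (0:ℝ) 1)),
      ‖gγ t‖ = (eVariationOn γ (Set.Icc 0 1)).toReal) :
    ∃ c > 0, ∀ ε > 0, ∀ φ gφ : ℝ → E2,
      IntegrableOn gφ (Set.Icc 0 1) volume →
      (∀ t ∈ Set.Icc (0:ℝ) 1, φ t = φ 0 + ∫ s in (0:ℝ)..t, gφ s) →
      (∫⁻ t in Set.Icc (0:ℝ) 1, lambdaStar R (gφ t)) < ⊤ →
      ENNReal.ofReal ((eVariationOn γ (Set.Icc 0 1)).toReal + ε) ≤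
        eVariationOn φ (Set.Icc 0 1) →
      (∫⁻ t in Set.Icc (0:ℝ) 1, lambdaStar R (gγ t)) + ENNReal.ofReal (c * ε) ≤
        ∫⁻ t in Set.Icc (0:ℝ) 1, lambdaStar R (gφ t) := by
  have := isProbabilityMeasure_uniformOn_ball hR (0 : E2)
  simp only [lambdaStar_eq_legendreTransform]
  obtain ⟨c, hc, h⟩ := statement13_general _ (isRotationInvariant_uniformOn_ball R)
    (fun η => integrable_uniformOn_ball hR 0 (by fun_prop)) γ gγ hintγ hACγ hpos hconst
  exact ⟨c, hc, fun ε hε φ gφ hint hAC _ => h ε hε φ gφ hint hAC⟩
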